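/- Let d ≥ 2, 0 ≤ β ≤ 1, and A ≥ 1. There exist constants C > 1 and 0 < c < 1, depending only on d and A, such that for every odd prime power q the following holds: if E, F ⊆ F_q^d satisfy |E ∩ l_x| ≤ A q^β for all x ∈ F_q^d \ {0} and |E||F| ≥ C q^{d+β}, then there exists a subset E₀ ⊆ E with |E₀| ≥ c q^{−β}|E| such that |Π(E₀,F)| ≥ c q. -/

import Mathlib

/-! The choice `E₀ = E` works, so it suffices to bound `|Π(E,F)|` from below, and a single
`x ∈ E` already yields `≥ q/2` values `x·y`.  Let `P(x)` be the number of pairs `(y,y') ∈ F²` with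
`x·y = x·y'` and `V(x) = P(x) - |F|²/q`.  By Cauchy–Schwarz `V ≥ 0`; `V` is constant on punctured
lines through the origin; and counting hyperplanes gives `∑_x V(x) = |F|(q-1)q^{d-1}`.
Since a punctured line has `q-1` points and contains at most `Aq^β` points of `E`,
`(q-1) ∑_{x ∈ E\{0}} V(x) ≤ Aq^β ∑_z V(z)`, so that `∑_{x ∈ E\{0}} V(x) ≤ A q^{β+d-1}|F|`.
With `C = 2A` some `x ∈ E \ {0}` has `V(x) ≤ |F|²/q`, and Cauchy–Schwarz on the support of
`t ↦ #{y ∈ F : x·y = t}` finishes. -/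

open Finset

noncomputable section

/-- dot product on `Fin d → K` -/
def fqDot {K : Type} [Field K] {d : ℕ} (x y : Fin d → K) : K := ∑ i, x i * y i

/-- dot product set Π(E,F) -/
def dotSet {K : Type} [Field K] [DecidableEq K] {d : ℕ}
    (E F : Finset (Fin d → K)) : Finset K :=
  (E ×ˢ F).image fun p => fqDot p.1 p.2

/-- punctured line through the origin and x -/
def lineThrough {K : Type} [Field K] [Fintype K] [DecidableEq K] {d : ℕ}
    (x : Fin d → K) : Finset (Fin d → K) :=
  univ.filter fun y => ∃ s : K, s ≠ 0 ∧ y = s • x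

/-- Fourier transform of the indicator of F -/
def ftransform {K : Type} [Field K] [Fintype K] {d : ℕ}
    (ψ : AddChar K ℂ) (F : Finset (Fin d → K)) (m : Fin d → K) : ℂ :=
  ((Fintype.card K : ℂ) ^ d)⁻¹ * ∑ x ∈ F, ψ (-(fqDot x m))

/-- the quantity 𝔅(E,F) -/
def Bquant {K : Type} [Field K] [Fintype K] [DecidableEq K] {d : ℕ}
    (ψ : AddChar K ℂ) (E F : Finset (Fin d → K)) : ℝ :=
  ∑ x ∈ univ.filter (fun x : Fin d → K => x ≠ 0),
    ((E ∩ lineThrough x).card : ℝ) * ‖ftransform ψ F x‖ ^ 2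

section Aux

variable {K : Type} [Field K] {d : ℕ}

lemma fqDot_smul (s : K) (x y : Fin d → K) : fqDot (s • x) y = s * fqDot x y := by
  simp [fqDot, Finset.mul_sum, mul_assoc]

variable [DecidableEq K]

/-- The number of `y ∈ F` with `x·y = t`. -/
def fiberCount (F : Finset (Fin d → K)) (x : Fin d → K) (t : K) : ℕ :=
  (F.filter fun y => fqDot x y = t).card

/-- The number of pairs in `F × F` with `x·y = x·y'`. -/
def pairCount (F : Finset (Fin d → K)) (x : Fin d → K) : ℕ :=
  ((F ×ˢ F).filter fun p => fqDot x p.1 = fqDot x p.2).card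

lemma pairCount_eq_sum (F : Finset (Fin d → K)) (x : Fin d → K) (T : Finset K)
    (hT : ∀ y ∈ F, fqDot x y ∈ T) :
    pairCount F x = ∑ t ∈ T, fiberCount F x t ^ 2 := by
  unfold pairCount fiberCount
  rw [Finset.card_eq_sum_card_fiberwise (f := fun p => fqDot x p.1) (t := T)]
  · refine Finset.sum_congr rfl fun t _ => ?_
    rw [sq, ← Finset.card_product]
    congr 1
    ext ⟨a, b⟩
    simp only [mem_filter, mem_product]
    constructor
    · rintro ⟨⟨⟨h1, h2⟩, h3⟩, h4⟩
      exact ⟨⟨h1, h4⟩, h2, h3 ▸ h4⟩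
    · rintro ⟨⟨h1, h4⟩, h2, h3⟩
      exact ⟨⟨⟨h1, h2⟩, h4.trans h3.symm⟩, h4⟩
  · intro p hp
    simp only [coe_filter, mem_product, Set.mem_ofPred_eq] at hp
    exact hT _ hp.1.1

/-- Cauchy–Schwarz over any set `T` of values containing all `x·y`, `y ∈ F`. -/
lemma card_sq_le (F : Finset (Fin d → K)) (x : Fin d → K) (T : Finset K)
    (hT : ∀ y ∈ F, fqDot x y ∈ T) :
    (F.card : ℝ) ^ 2 ≤ T.card * pairCount F x := by
  have h1 : F.card = ∑ t ∈ T, fiberCount F x t :=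
    Finset.card_eq_sum_card_fiberwise (f := fun y => fqDot x y) (t := T) hT
  rw [pairCount_eq_sum F x T hT, h1]
  exact_mod_cast sq_sum_le_card_mul_sum_sq (s := T) (f := fun t => fiberCount F x t)

variable [Fintype K]

/-- The excess of the number of pairs over its expected value, equivalently
`∑ t, (fiberCount F x t - |F| / q) ^ 2`. -/
def excess (F : Finset (Fin d → K)) (x : Fin d → K) : ℝ :=
  (pairCount F x : ℝ) - (F.card : ℝ) ^ 2 / (Fintype.card K : ℝ)

lemma excess_nonneg (F : Finset (Fin d → K)) (x : Fin d → K) : 0 ≤ excess F x := by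
  have h := card_sq_le F x univ (fun _ _ => mem_univ _)
  have hq : (0 : ℝ) < Fintype.card K := by exact_mod_cast Fintype.card_pos
  rw [card_univ] at h
  unfold excess
  rw [sub_nonneg, div_le_iff₀ hq]
  linarith

lemma excess_smul (F : Finset (Fin d → K)) (x : Fin d → K) (s : K) (hs : s ≠ 0) :
    excess F (s • x) = excess F x := by
  unfold excess pairCount
  simp only [fqDot_smul, mul_right_inj' hs]

lemma card_lineThrough (x : Fin d → K) (hx : x ≠ 0) :
    (lineThrough x).card = Fintype.card K - 1 := by
  have : lineThrough x = (univ.erase (0 : K)).image fun s => s • x := by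
    ext y
    simp [lineThrough, eq_comm]
  rw [this, Finset.card_image_of_injective _ (smul_left_injective K hx),
    card_erase_of_mem (mem_univ _), card_univ]

/-- A hyperplane through the origin has `q ^ (d - 1)` points, in subtraction-free form. -/
lemma card_hyperplane (v : Fin d → K) (hv : v ≠ 0) :
    Fintype.card K * (univ.filter fun x : Fin d → K => fqDot x v = 0).card
      = Fintype.card K ^ d := by
  obtain ⟨i, hi⟩ := Function.ne_iff.mp hv
  have hadd : ∀ x y : Fin d → K, fqDot (x + y) v = fqDot x v + fqDot y v := by
    intro x y; simp [fqDot, add_mul, Finset.sum_add_distrib]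
  have hw : fqDot (Pi.single i (v i)⁻¹) v = 1 := by
    have : v i ≠ 0 := hi
    simp [fqDot, Pi.single_apply, this]
  set w : Fin d → K := Pi.single i (v i)⁻¹
  have hfib : ∀ t : K, (univ.filter fun x : Fin d → K => fqDot x v = t).card
      = (univ.filter fun x : Fin d → K => fqDot x v = 0).card := by
    intro t
    refine Finset.card_bij' (fun x _ => x + (-t) • w) (fun x _ => x + t • w) ?_ ?_ ?_ ?_
    · intro x hx
      simp only [mem_filter, mem_univ, true_and] at hx ⊢
      rw [hadd, fqDot_smul, hw, hx]; ring
    · intro x hx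
      simp only [mem_filter, mem_univ, true_and] at hx ⊢
      rw [hadd, fqDot_smul, hw, hx]; ring
    · intro x _; simp
    · intro x _; simp
  have h := Finset.card_eq_sum_card_fiberwise (s := (univ : Finset (Fin d → K)))
    (f := fun x => fqDot x v) (t := univ) (fun _ _ => by simp)
  simp only [hfib, sum_const, card_univ, smul_eq_mul, Fintype.card_pi_const] at h
  exact h.symm

lemma sum_pairCount (F : Finset (Fin d → K)) :
    (Fintype.card K : ℝ) * ∑ x, (pairCount F x : ℝ)
      = (Fintype.card K : ℝ) ^ d * ((F.card : ℝ) ^ 2 + (Fintype.card K - 1) * F.card) := by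
  have h1 : ∑ x, pairCount F x = ∑ p ∈ F ×ˢ F,
      (univ.filter fun x : Fin d → K => fqDot x p.1 = fqDot x p.2).card := by
    unfold pairCount
    exact Finset.sum_card_bipartiteAbove_eq_sum_card_bipartiteBelow
      (fun (x : Fin d → K) (p : (Fin d → K) × (Fin d → K)) => fqDot x p.1 = fqDot x p.2)
  have h2 : ∀ p : (Fin d → K) × (Fin d → K),
      (Fintype.card K : ℝ) *
        ((univ.filter fun x : Fin d → K => fqDot x p.1 = fqDot x p.2).card : ℝ)
      = (Fintype.card K : ℝ) ^ d +
        if p.1 = p.2 then (Fintype.card K : ℝ) ^ d * (Fintype.card K - 1) else 0 := by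
    rintro ⟨a, b⟩
    by_cases hab : a = b
    · subst hab
      simp
      ring
    · have h := card_hyperplane (a - b) (sub_ne_zero.mpr hab)
      have hs : ∀ x : Fin d → K, fqDot x (a - b) = 0 ↔ fqDot x a = fqDot x b := by
        intro x
        rw [← sub_eq_zero (a := fqDot x a)]
        simp [fqDot, mul_sub, Finset.sum_sub_distrib]
      simp only [hs] at h
      simp only [hab, if_false, add_zero]
      exact_mod_cast h
  have h3 : (∑ x, (pairCount F x : ℝ)) = ∑ p ∈ F ×ˢ F,
      ((univ.filter fun x : Fin d → K => fqDot x p.1 = fqDot x p.2).card : ℝ) := by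
    exact_mod_cast h1
  rw [h3, Finset.mul_sum, Finset.sum_congr rfl fun p _ => h2 p, Finset.sum_add_distrib,
    Finset.sum_product (f := fun p : (Fin d → K) × (Fin d → K) =>
      if p.1 = p.2 then (Fintype.card K : ℝ) ^ d * (Fintype.card K - 1) else 0)]
  simp
  ring

lemma sum_excess (F : Finset (Fin d → K)) :
    (Fintype.card K : ℝ) * ∑ x, excess F x
      = (Fintype.card K : ℝ) ^ d * ((Fintype.card K - 1) * F.card) := by
  have hq : (Fintype.card K : ℝ) ≠ 0 := by exact_mod_cast Fintype.card_ne_zero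
  unfold excess
  rw [Finset.sum_sub_distrib, mul_sub, sum_pairCount]
  simp
  field_simp
  ring

/-- Double counting of `excess` over the punctured lines spanned by the points of `E \ {0}`. -/
lemma sum_excess_le (E F : Finset (Fin d → K)) (M : ℝ) (hM : 0 ≤ M)
    (hE : ∀ x : Fin d → K, x ≠ 0 → ((E ∩ lineThrough x).card : ℝ) ≤ M) :
    ((Fintype.card K : ℝ) - 1) * ∑ x ∈ E.erase 0, excess F x ≤ M * ∑ x, excess F x := by
  have h1 : ∀ x ∈ E.erase 0, ((Fintype.card K : ℝ) - 1) * excess F x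
      = ∑ z, if z ∈ lineThrough x then excess F z else 0 := by
    intro x hx
    have hx0 := (mem_erase.mp hx).1
    have hc : ((Fintype.card K : ℝ) - 1) = ((lineThrough x).card : ℝ) := by
      rw [card_lineThrough x hx0, Nat.cast_sub Fintype.card_pos]; simp
    rw [hc, Finset.sum_ite_mem, univ_inter, ← nsmul_eq_mul, ← Finset.sum_const]
    refine Finset.sum_congr rfl fun z hz => ?_
    obtain ⟨s, hs, rfl⟩ := (mem_filter.mp hz).2
    exact (excess_smul F x s hs).symm
  rw [Finset.mul_sum, Finset.sum_congr rfl h1, Finset.sum_comm, Finset.mul_sum]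
  refine Finset.sum_le_sum fun z _ => ?_
  rw [← Finset.sum_filter, Finset.sum_const, nsmul_eq_mul]
  refine mul_le_mul_of_nonneg_right ?_ (excess_nonneg F z)
  by_cases hz : z = 0
  · have : (E.erase 0).filter (fun x => z ∈ lineThrough x) = ∅ := by
      refine Finset.filter_eq_empty_iff.mpr fun x hx hzx => ?_
      obtain ⟨s, hs, h⟩ := (mem_filter.mp hzx).2
      rw [hz, eq_comm, smul_eq_zero] at h
      exact h.elim hs (mem_erase.mp hx).1
    rw [this]
    simpa using hM
  · refine le_trans ?_ (hE z hz)
    refine Nat.cast_le.mpr (card_le_card fun x hx => ?_)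
    obtain ⟨hx, hzx⟩ := mem_filter.mp hx
    obtain ⟨s, hs, h⟩ := (mem_filter.mp hzx).2
    refine mem_inter.mpr ⟨(mem_erase.mp hx).2, mem_filter.mpr ⟨mem_univ _, s⁻¹, inv_ne_zero hs, ?_⟩⟩
    rw [h, smul_smul, inv_mul_cancel₀ hs, one_smul]

end Aux

/-- under the line-intersection bound |E ∩ l_x| ≤ A q^β and
|E||F| ≥ C q^{d+β}, some E₀ ⊆ E with |E₀| ≥ c q^{-β}|E| has |Π(E₀,F)| ≥ cq. -/
theorem dotSet_card_subset_of_line_bound (d : ℕ) (hd : 2 ≤ d) (A : ℝ) (hA : 1 ≤ A) :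
    ∃ C : ℝ, 1 < C ∧ ∃ c : ℝ, 0 < c ∧ c < 1 ∧
      ∀ β : ℝ, 0 ≤ β → β ≤ 1 →
      ∀ (K : Type) [Field K] [Fintype K] [DecidableEq K],
        Odd (Fintype.card K) →
        ∀ E F : Finset (Fin d → K),
          (∀ x : Fin d → K, x ≠ 0 →
            ((E ∩ lineThrough x).card : ℝ) ≤ A * (Fintype.card K : ℝ) ^ β) →
          ((E.card : ℝ) * (F.card : ℝ) ≥ C * (Fintype.card K : ℝ) ^ ((d : ℝ) + β)) →
          ∃ E₀ ⊆ E, ((E₀.card : ℝ) ≥ c * (Fintype.card K : ℝ) ^ (-β) * (E.card : ℝ)) ∧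
            ((dotSet E₀ F).card : ℝ) ≥ c * (Fintype.card K : ℝ) := by
  refine ⟨2 * A, by linarith, 1 / 2, by norm_num, by norm_num, ?_⟩
  intro β hβ0 _ K _ _ _ _ E F hE hEF
  have hq1 : (1 : ℝ) < Fintype.card K := by exact_mod_cast Fintype.one_lt_card
  have hq0 : (0 : ℝ) < Fintype.card K := by linarith
  rw [Real.rpow_add hq0, Real.rpow_natCast] at hEF
  have hqβ : (1 : ℝ) ≤ (Fintype.card K : ℝ) ^ β := Real.one_le_rpow hq1.le hβ0
  have hneg : (Fintype.card K : ℝ) ^ (-β) ≤ 1 :=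
    Real.rpow_le_one_of_one_le_of_nonpos hq1.le (by linarith)
  have hS := sum_excess_le E F _ (by positivity) hE
  have hT := sum_excess F
  set q : ℝ := (Fintype.card K : ℝ) with hq
  set Q : ℝ := q ^ β
  have hqd : (0 : ℝ) < q ^ d := by positivity
  have hFle : (F.card : ℝ) ≤ q ^ d := by
    have h := Finset.card_le_univ F
    rw [Fintype.card_pi_const] at h
    rw [hq]
    exact_mod_cast h
  have hF0 : (0 : ℝ) < F.card := by
    have : 0 < 2 * A * (q ^ d * Q) := by positivity
    by_contra! h
    have h0 : (F.card : ℝ) = 0 := le_antisymm h (Nat.cast_nonneg _)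
    rw [h0] at hEF
    linarith
  -- `|F| ≤ q ^ d` forces `|E| ≥ 2`, so removing the origin costs at most half of `E`.
  have hE2 : (2 : ℝ) ≤ E.card := by
    by_contra! h
    have h1 : (E.card : ℝ) * F.card < 2 * q ^ d :=
      (mul_lt_mul_of_pos_right h hF0).trans_le (by linarith)
    have h2 : q ^ d ≤ q ^ d * Q := le_mul_of_one_le_right hqd.le hqβ
    have h3 : q ^ d * Q ≤ A * (q ^ d * Q) := le_mul_of_one_le_left (by positivity) hA
    linarith
  have hE' : (E.card : ℝ) ≤ 2 * ((E.erase 0).card : ℝ) := by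
    have h : E.card ≤ (E.erase 0).card + 1 := by
      have := Finset.pred_card_le_card_erase (s := E) (a := 0)
      omega
    have h' : (E.card : ℝ) ≤ (E.erase 0).card + 1 := by exact_mod_cast h
    linarith
  have hsum : q * ∑ x ∈ E.erase 0, excess F x ≤ A * Q * (q ^ d * F.card) := by
    refine le_of_mul_le_mul_left ?_ (sub_pos.mpr hq1)
    calc (q - 1) * (q * ∑ x ∈ E.erase 0, excess F x)
        = q * ((q - 1) * ∑ x ∈ E.erase 0, excess F x) := by ring
      _ ≤ q * (A * Q * ∑ x, excess F x) := mul_le_mul_of_nonneg_left hS hq0.le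
      _ = A * Q * (q * ∑ x, excess F x) := by ring
      _ = (q - 1) * (A * Q * (q ^ d * F.card)) := by rw [hT]; ring
  -- averaging over `E \ {0}`
  obtain ⟨x, hx, hVx⟩ : ∃ x ∈ E.erase 0, excess F x ≤ (F.card : ℝ) ^ 2 / q := by
    refine Finset.exists_le_of_sum_le (Finset.card_pos.mp ?_) ?_
    · have : (0 : ℝ) < (E.erase 0).card := by linarith
      exact_mod_cast this
    · rw [Finset.sum_const, nsmul_eq_mul, mul_div_assoc', le_div_iff₀ hq0]
      have h1 : A * Q * q ^ d ≤ (E.erase 0).card * F.card := by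
        have := mul_le_mul_of_nonneg_right hE' hF0.le
        linarith
      have h2 := mul_le_mul_of_nonneg_right h1 hF0.le
      linarith
  refine ⟨E, subset_rfl, ?_, ?_⟩
  · have hE0 : (0 : ℝ) ≤ E.card := Nat.cast_nonneg _
    have := mul_le_mul_of_nonneg_right hneg hE0
    linarith
  · have hCS := card_sq_le F x (dotSet E F) fun y hy =>
      mem_image.mpr ⟨(x, y), mem_product.mpr ⟨(mem_erase.mp hx).2, hy⟩, rfl⟩
    have hP : (pairCount F x : ℝ) ≤ 2 * ((F.card : ℝ) ^ 2 / q) := by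
      unfold excess at hVx
      linarith
    have h1 : (F.card : ℝ) ^ 2 ≤ (dotSet E F).card * (2 * ((F.card : ℝ) ^ 2 / q)) :=
      hCS.trans (mul_le_mul_of_nonneg_left hP (Nat.cast_nonneg _))
    have h2 : (F.card : ℝ) ^ 2 * q ≤ (F.card : ℝ) ^ 2 * (2 * (dotSet E F).card) := by
      calc (F.card : ℝ) ^ 2 * q
          ≤ ((dotSet E F).card * (2 * ((F.card : ℝ) ^ 2 / q))) * q :=
            mul_le_mul_of_nonneg_right h1 hq0.le
        _ = (F.card : ℝ) ^ 2 * (2 * (dotSet E F).card) := by field_simp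
    have h3 := le_of_mul_le_mul_left h2 (by positivity)
    linarith
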